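/- arXiv:math/9804130 — 2 statements merged into one kernel-verified Lean document; each statement's English description precedes it below -/
import Mathlib

section
/- Let α = (N; A, B, C, D; X, N⁻, N⁺) be an arbitrary multiparametric LSDS and let X₁ ⊆ X be the smallest closed subspace that contains the ranges of all B_k and of all C_j* (k, j = 1,…,N) and is invariant under every A_k and every A_k*. Then: (i) with respect to X = X₁^⊥ ⊕ X₁ each A_k is block diagonal (X₁ reduces A_k), each B_k maps into X₁, and each C_k vanishes on X₁^⊥; the compressed system α₁ = (N; A|X₁, B, C|X₁, D; X₁, N⁻, N⁺) is closely connected. (ii) If α is dissipative (respectively conservative), i.e. ‖ζG‖ ≤ 1 (respectively ζG unitary) for all ζ ∈ T^N, then α₁ is dissipative (respectively conservative). (iii) θ_{α₁}(z) = θ_α(z) for all z in the open unit polydisc D^N on which both transfer functions are defined. -/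
open ContinuousLinearMap

noncomputable section

/-- The block operator `[[A, B], [C, D]] : X ⊕ N⁻ → X ⊕ N⁺` (Hilbert space direct sum). -/
def blockOp {X Nm Np : Type*}
    [NormedAddCommGroup X] [InnerProductSpace ℂ X]
    [NormedAddCommGroup Nm] [InnerProductSpace ℂ Nm]
    [NormedAddCommGroup Np] [InnerProductSpace ℂ Np]
    (A : X →L[ℂ] X) (B : Nm →L[ℂ] X) (C : X →L[ℂ] Np) (D : Nm →L[ℂ] Np) :
    WithLp 2 (X × Nm) →L[ℂ] WithLp 2 (X × Np) :=
  ((WithLp.prodContinuousLinearEquiv 2 ℂ X Np).symm :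
      (X × Np) →L[ℂ] WithLp 2 (X × Np)) ∘L
    ((A ∘L ContinuousLinearMap.fst ℂ X Nm + B ∘L ContinuousLinearMap.snd ℂ X Nm).prod
      (C ∘L ContinuousLinearMap.fst ℂ X Nm + D ∘L ContinuousLinearMap.snd ℂ X Nm)) ∘L
    (WithLp.prodContinuousLinearEquiv 2 ℂ X Nm : WithLp 2 (X × Nm) →L[ℂ] (X × Nm))

/-- A bounded operator between Hilbert spaces is unitary: `G*G = I` and `GG* = I`. -/
def IsUnitaryOp {E F : Type*}
    [NormedAddCommGroup E] [InnerProductSpace ℂ E] [CompleteSpace E]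
    [NormedAddCommGroup F] [InnerProductSpace ℂ F] [CompleteSpace F]
    (G : E →L[ℂ] F) : Prop :=
  adjoint G ∘L G = ContinuousLinearMap.id ℂ E ∧
    G ∘L adjoint G = ContinuousLinearMap.id ℂ F

/-- Close connectedness of a multiparametric system. -/
def CloselyConnectedN {Nn : ℕ} {X Nm Np : Type*}
    [NormedAddCommGroup X] [InnerProductSpace ℂ X] [CompleteSpace X]
    [NormedAddCommGroup Nm] [InnerProductSpace ℂ Nm] [CompleteSpace Nm]
    [NormedAddCommGroup Np] [InnerProductSpace ℂ Np] [CompleteSpace Np]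
    (A : Fin Nn → (X →L[ℂ] X)) (B : Fin Nn → (Nm →L[ℂ] X))
    (C : Fin Nn → (X →L[ℂ] Np)) : Prop :=
  (Submodule.span ℂ {x : X | ∃ (w : List (Fin Nn × Bool)) (y : X),
      ((∃ k u, y = B k u) ∨ (∃ j v, y = adjoint (C j) v)) ∧
      x = ((w.map fun p => cond p.2 (A p.1) (adjoint (A p.1))).prod) y}).topologicalClosure
    = ⊤

theorem aux_adjoint_coe {X Y : Type*}
    [NormedAddCommGroup X] [InnerProductSpace ℂ X] [CompleteSpace X]
    [NormedAddCommGroup Y] [InnerProductSpace ℂ Y] [CompleteSpace Y]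
    (X₁ : Submodule ℂ X) [CompleteSpace X₁]
    (C : X →L[ℂ] Y) (C₁ : X₁ →L[ℂ] Y) (h : ∀ x : X₁, C₁ x = C x) (y : Y)
    (hy : adjoint C y ∈ X₁) : ((adjoint C₁ y : X₁) : X) = adjoint C y := by
  have : adjoint C₁ y = ⟨adjoint C y, hy⟩ := by
    apply ext_inner_left ℂ
    intro v
    rw [adjoint_inner_right, h, Submodule.coe_inner, adjoint_inner_right]
  rw [this]

theorem aux_adjoint_coe_end {X : Type*}
    [NormedAddCommGroup X] [InnerProductSpace ℂ X] [CompleteSpace X]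
    (X₁ : Submodule ℂ X) [CompleteSpace X₁]
    (A : X →L[ℂ] X) (A₁ : X₁ →L[ℂ] X₁) (h : ∀ x : X₁, (A₁ x : X) = A x) (y : X₁)
    (hy : adjoint A y ∈ X₁) : ((adjoint A₁ y : X₁) : X) = adjoint A y := by
  have : adjoint A₁ y = ⟨adjoint A y, hy⟩ := by
    apply ext_inner_left ℂ
    intro v
    rw [adjoint_inner_right, Submodule.coe_inner, h, Submodule.coe_inner, adjoint_inner_right]
  rw [this]

theorem aux_adjoint_coe_in {X Y : Type*}
    [NormedAddCommGroup X] [InnerProductSpace ℂ X] [CompleteSpace X]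
    [NormedAddCommGroup Y] [InnerProductSpace ℂ Y] [CompleteSpace Y]
    (X₁ : Submodule ℂ X) [CompleteSpace X₁]
    (B : Y →L[ℂ] X) (B₁ : Y →L[ℂ] X₁) (h : ∀ u, (B₁ u : X) = B u) (x : X₁) :
    adjoint B₁ x = adjoint B x := by
  apply ext_inner_left ℂ
  intro v
  rw [adjoint_inner_right, Submodule.coe_inner, h, adjoint_inner_right]

theorem aux_blockOp_apply {X Nm Np : Type*}
    [NormedAddCommGroup X] [InnerProductSpace ℂ X]
    [NormedAddCommGroup Nm] [InnerProductSpace ℂ Nm]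
    [NormedAddCommGroup Np] [InnerProductSpace ℂ Np]
    (A : X →L[ℂ] X) (B : Nm →L[ℂ] X) (C : X →L[ℂ] Np) (D : Nm →L[ℂ] Np)
    (x : WithLp 2 (X × Nm)) :
    blockOp A B C D x = WithLp.toLp 2 (A x.fst + B x.snd, C x.fst + D x.snd) := rfl

theorem aux_adjoint_blockOp {X Nm Np : Type*}
    [NormedAddCommGroup X] [InnerProductSpace ℂ X] [CompleteSpace X]
    [NormedAddCommGroup Nm] [InnerProductSpace ℂ Nm] [CompleteSpace Nm]
    [NormedAddCommGroup Np] [InnerProductSpace ℂ Np] [CompleteSpace Np]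
    (A : X →L[ℂ] X) (B : Nm →L[ℂ] X) (C : X →L[ℂ] Np) (D : Nm →L[ℂ] Np) :
    adjoint (blockOp A B C D) = blockOp (adjoint A) (adjoint C) (adjoint B) (adjoint D) := by
  symm
  rw [eq_adjoint_iff]
  intro x y
  simp only [aux_blockOp_apply, WithLp.prod_inner_apply, inner_add_left, inner_add_right,
    adjoint_inner_left, WithLp.fst, WithLp.snd]
  ring

/-- The isometric inclusion of `X₁ ⊕ Y` into `X ⊕ Y`. -/
def auxJ {X Y : Type*} [NormedAddCommGroup X] [InnerProductSpace ℂ X]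
    [NormedAddCommGroup Y] [InnerProductSpace ℂ Y] (X₁ : Submodule ℂ X)
    (x : WithLp 2 (X₁ × Y)) : WithLp 2 (X × Y) := WithLp.toLp 2 ((x.fst : X), x.snd)

theorem auxJ_norm {X Y : Type*} [NormedAddCommGroup X] [InnerProductSpace ℂ X]
    [NormedAddCommGroup Y] [InnerProductSpace ℂ Y] (X₁ : Submodule ℂ X)
    (x : WithLp 2 (X₁ × Y)) : ‖auxJ X₁ x‖ = ‖x‖ := by
  rw [WithLp.prod_norm_eq_of_L2, WithLp.prod_norm_eq_of_L2]
  rfl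

theorem auxJ_inj {X Y : Type*} [NormedAddCommGroup X] [InnerProductSpace ℂ X]
    [NormedAddCommGroup Y] [InnerProductSpace ℂ Y] (X₁ : Submodule ℂ X)
    {x y : WithLp 2 (X₁ × Y)} (h : auxJ X₁ x = auxJ X₁ y) : x = y := by
  have h1 : (x.fst : X) = y.fst := congrArg (fun t => t.fst) h
  have h2 : x.snd = y.snd := congrArg (fun t => t.snd) h
  apply WithLp.ofLp_injective
  exact Prod.ext (Subtype.ext h1) h2

theorem auxJ_intertwine {X Nm Np : Type*}
    [NormedAddCommGroup X] [InnerProductSpace ℂ X]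
    [NormedAddCommGroup Nm] [InnerProductSpace ℂ Nm]
    [NormedAddCommGroup Np] [InnerProductSpace ℂ Np] (X₁ : Submodule ℂ X)
    (A : X →L[ℂ] X) (B : Nm →L[ℂ] X) (C : X →L[ℂ] Np) (D : Nm →L[ℂ] Np)
    (A₁ : X₁ →L[ℂ] X₁) (B₁ : Nm →L[ℂ] X₁) (C₁ : X₁ →L[ℂ] Np)
    (hA : ∀ x : X₁, (A₁ x : X) = A x) (hB : ∀ u, (B₁ u : X) = B u)
    (hC : ∀ x : X₁, C₁ x = C x) (x : WithLp 2 (X₁ × Nm)) :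
    auxJ X₁ (blockOp A₁ B₁ C₁ D x) = blockOp A B C D (auxJ X₁ x) := by
  simp only [aux_blockOp_apply, auxJ, WithLp.fst, WithLp.snd, Submodule.coe_add, hA, hB, hC]

/-- let `X₁` be the smallest closed subspace of `X` containing the ranges of all
`B_k` and `C_j*` and invariant under all `A_k` and `A_k*`, and let
`α₁ = (N; A|X₁, B, C|X₁, D; X₁, N⁻, N⁺)` be the compressed system.  Then (i) each `A_k` maps
`X₁ᗮ` into `X₁ᗮ` and each `C_k` vanishes on `X₁ᗮ`, and `α₁` is closely connected; (ii) if `α`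
is dissipative (resp. conservative) then so is `α₁`; (iii) the transfer functions of `α` and
`α₁` agree wherever both are defined on the open unit polydisc. -/
theorem compression_to_closely_connected {Nn : ℕ} {X Nm Np : Type*}
    [NormedAddCommGroup X] [InnerProductSpace ℂ X] [CompleteSpace X]
    [TopologicalSpace.SeparableSpace X]
    [NormedAddCommGroup Nm] [InnerProductSpace ℂ Nm] [CompleteSpace Nm]
    [TopologicalSpace.SeparableSpace Nm]
    [NormedAddCommGroup Np] [InnerProductSpace ℂ Np] [CompleteSpace Np]
    [TopologicalSpace.SeparableSpace Np]
    (A : Fin Nn → (X →L[ℂ] X)) (B : Fin Nn → (Nm →L[ℂ] X))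
    (C : Fin Nn → (X →L[ℂ] Np)) (D : Fin Nn → (Nm →L[ℂ] Np))
    (X₁ : Submodule ℂ X) [CompleteSpace X₁]
    (hX₁closed : IsClosed (X₁ : Set X))
    (hB : ∀ k u, B k u ∈ X₁)
    (hC : ∀ j v, adjoint (C j) v ∈ X₁)
    (hA : ∀ k, ∀ x ∈ X₁, A k x ∈ X₁)
    (hAstar : ∀ k, ∀ x ∈ X₁, adjoint (A k) x ∈ X₁)
    (hmin : ∀ Y : Submodule ℂ X, IsClosed (Y : Set X) →
      (∀ k u, B k u ∈ Y) → (∀ j v, adjoint (C j) v ∈ Y) →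
      (∀ k, ∀ x ∈ Y, A k x ∈ Y) → (∀ k, ∀ x ∈ Y, adjoint (A k) x ∈ Y) → X₁ ≤ Y)
    (A₁ : Fin Nn → (X₁ →L[ℂ] X₁)) (hA₁ : ∀ k (x : X₁), (A₁ k x : X) = A k x)
    (B₁ : Fin Nn → (Nm →L[ℂ] X₁)) (hB₁ : ∀ k u, (B₁ k u : X) = B k u)
    (C₁ : Fin Nn → (X₁ →L[ℂ] Np)) (hC₁ : ∀ k (x : X₁), C₁ k x = C k x) :
    -- (i)
    ((∀ k : Fin Nn, ∀ x ∈ X₁ᗮ, A k x ∈ X₁ᗮ ∧ C k x = 0) ∧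
      CloselyConnectedN A₁ B₁ C₁) ∧
    -- (ii)
    ((∀ ζ : Fin Nn → ℂ, (∀ k, ‖ζ k‖ = 1) →
        ‖blockOp (∑ k, ζ k • A k) (∑ k, ζ k • B k) (∑ k, ζ k • C k) (∑ k, ζ k • D k)‖ ≤ 1) →
      (∀ ζ : Fin Nn → ℂ, (∀ k, ‖ζ k‖ = 1) →
        ‖blockOp (∑ k, ζ k • A₁ k) (∑ k, ζ k • B₁ k) (∑ k, ζ k • C₁ k)
            (∑ k, ζ k • D k)‖ ≤ 1)) ∧
    ((∀ ζ : Fin Nn → ℂ, (∀ k, ‖ζ k‖ = 1) →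
        IsUnitaryOp
          (blockOp (∑ k, ζ k • A k) (∑ k, ζ k • B k) (∑ k, ζ k • C k) (∑ k, ζ k • D k))) →
      (∀ ζ : Fin Nn → ℂ, (∀ k, ‖ζ k‖ = 1) →
        IsUnitaryOp
          (blockOp (∑ k, ζ k • A₁ k) (∑ k, ζ k • B₁ k) (∑ k, ζ k • C₁ k)
            (∑ k, ζ k • D k)))) ∧
    -- (iii)
    (∀ z : Fin Nn → ℂ, (∀ k, ‖z k‖ < 1) →
      IsUnit ((1 : X →L[ℂ] X) - ∑ k, z k • A k) →
      IsUnit ((1 : X₁ →L[ℂ] X₁) - ∑ k, z k • A₁ k) →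
        ∑ k, z k • D k +
          (∑ k, z k • C₁ k) ∘L (Ring.inverse (1 - ∑ k, z k • A₁ k)) ∘L (∑ k, z k • B₁ k) =
        ∑ k, z k • D k +
          (∑ k, z k • C k) ∘L (Ring.inverse (1 - ∑ k, z k • A k)) ∘L (∑ k, z k • B k)) := by
  have adjA : ∀ k (x : X₁), ((adjoint (A₁ k) x : X₁) : X) = adjoint (A k) x := fun k x =>
    aux_adjoint_coe_end X₁ (A k) (A₁ k) (hA₁ k) x (hAstar k x x.2)
  have adjC : ∀ k v, ((adjoint (C₁ k) v : X₁) : X) = adjoint (C k) v := fun k v =>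
    aux_adjoint_coe X₁ (C k) (C₁ k) (hC₁ k) v (hC k v)
  have sA : ∀ (z : Fin Nn → ℂ) (x : X₁),
      (((∑ k, z k • A₁ k) x : X₁) : X) = (∑ k, z k • A k) x := by
    intro z x
    simp [ContinuousLinearMap.sum_apply, hA₁]
  have sB : ∀ (z : Fin Nn → ℂ) u,
      (((∑ k, z k • B₁ k) u : X₁) : X) = (∑ k, z k • B k) u := by
    intro z x
    simp [ContinuousLinearMap.sum_apply, hB₁]
  have sC : ∀ (z : Fin Nn → ℂ) (x : X₁),
      (∑ k, z k • C₁ k) x = (∑ k, z k • C k) x := by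
    intro z x
    simp [ContinuousLinearMap.sum_apply, hC₁]
  have mA : ∀ (z : Fin Nn → ℂ) (x : X₁), adjoint (∑ k, z k • A k) x ∈ X₁ := by
    intro z x
    rw [map_sum, ContinuousLinearMap.sum_apply]
    refine Submodule.sum_mem _ fun k _ => ?_
    rw [map_smulₛₗ]
    exact Submodule.smul_mem _ _ (hAstar k x x.2)
  have mC : ∀ (z : Fin Nn → ℂ) v, adjoint (∑ k, z k • C k) v ∈ X₁ := by
    intro z x
    rw [map_sum, ContinuousLinearMap.sum_apply]
    refine Submodule.sum_mem _ fun k _ => ?_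
    rw [map_smulₛₗ]
    exact Submodule.smul_mem _ _ (hC k x)
  refine ⟨⟨?_, ?_⟩, ?_, ?_, ?_⟩
  · intro k x hx
    rw [Submodule.mem_orthogonal] at hx
    constructor
    · rw [Submodule.mem_orthogonal]
      intro u hu
      rw [← adjoint_inner_left]
      exact hx _ (hAstar k u hu)
    · apply ext_inner_left ℂ
      intro v
      rw [← adjoint_inner_left, inner_zero_right]
      exact hx _ (hC k v)
  · unfold CloselyConnectedN
    set S : Set X₁ := {x : X₁ | ∃ (w : List (Fin Nn × Bool)) (y : X₁),
      ((∃ k u, y = B₁ k u) ∨ (∃ j v, y = adjoint (C₁ j) v)) ∧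
      x = ((w.map fun p => cond p.2 (A₁ p.1) (adjoint (A₁ p.1))).prod) y} with hS
    have inv : ∀ T : X₁ →L[ℂ] X₁, (∀ x ∈ S, T x ∈ S) →
        ∀ x ∈ (Submodule.span ℂ S).topologicalClosure,
          T x ∈ (Submodule.span ℂ S).topologicalClosure := by
      intro T hT
      have h1 : Submodule.span ℂ S ≤
          (Submodule.span ℂ S).topologicalClosure.comap (T : X₁ →ₗ[ℂ] X₁) := by
        rw [Submodule.span_le]
        intro x hx
        exact Submodule.le_topologicalClosure _ (Submodule.subset_span (hT x hx))
      exact Submodule.topologicalClosure_minimal _ h1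
        ((Submodule.isClosed_topologicalClosure _).preimage T.continuous)
    have invA : ∀ k, ∀ x ∈ S, A₁ k x ∈ S := by
      rintro k x ⟨w, y, hy, rfl⟩
      exact ⟨(k, true) :: w, y, hy, by simp⟩
    have invA' : ∀ k, ∀ x ∈ S, adjoint (A₁ k) x ∈ S := by
      rintro k x ⟨w, y, hy, rfl⟩
      exact ⟨(k, false) :: w, y, hy, by simp⟩
    have mem0 : ∀ x ∈ S, x ∈ (Submodule.span ℂ S).topologicalClosure := fun x hx =>
      Submodule.le_topologicalClosure _ (Submodule.subset_span hx)
    have key := hmin ((Submodule.span ℂ S).topologicalClosure.map X₁.subtype) (by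
        rw [Submodule.map_coe]
        exact (hX₁closed.isClosedEmbedding_subtypeVal).isClosedMap _
          (Submodule.isClosed_topologicalClosure _))
      (fun k u => ⟨B₁ k u, mem0 _ ⟨[], _, Or.inl ⟨k, u, rfl⟩, by simp⟩, hB₁ k u⟩)
      (fun k u => ⟨adjoint (C₁ k) u, mem0 _ ⟨[], _, Or.inr ⟨k, u, rfl⟩, by simp⟩, adjC k u⟩)
      (by
        rintro k _ ⟨x, hx, rfl⟩
        exact ⟨A₁ k x, inv _ (invA k) x hx, hA₁ k x⟩)
      (by
        rintro k _ ⟨x, hx, rfl⟩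
        exact ⟨adjoint (A₁ k) x, inv _ (invA' k) x hx, adjA k x⟩)
    rw [eq_top_iff]
    intro x _
    obtain ⟨y, hy, hyx⟩ := key x.2
    have : y = x := Subtype.ext hyx
    exact this ▸ hy
  · intro h ζ hζ
    refine ContinuousLinearMap.opNorm_le_bound _ zero_le_one fun x => ?_
    rw [← auxJ_norm, auxJ_intertwine X₁ _ _ _ _ _ _ _ (sA ζ) (sB ζ) (sC ζ), ← auxJ_norm X₁ x]
    exact ContinuousLinearMap.le_of_opNorm_le _ (h ζ hζ) _
  · intro h ζ hζ
    obtain ⟨h1, h2⟩ := h ζ hζ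
    have i1 := auxJ_intertwine X₁ _ _ _ (∑ k, ζ k • D k) _ _ _ (sA ζ) (sB ζ) (sC ζ)
    have i2 := auxJ_intertwine X₁ _ _ _ (adjoint (∑ k, ζ k • D k)) _ _ _
      (fun x => aux_adjoint_coe_end X₁ _ _ (sA ζ) x (mA ζ x))
      (fun v => aux_adjoint_coe X₁ _ _ (sC ζ) v (mC ζ v))
      (aux_adjoint_coe_in X₁ _ _ (sB ζ))
    simp only [← aux_adjoint_blockOp] at i2
    constructor
    · ext1 x
      apply auxJ_inj X₁
      rw [ContinuousLinearMap.comp_apply, i2, i1]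
      exact DFunLike.congr_fun h1 (auxJ X₁ x)
    · ext1 x
      apply auxJ_inj X₁
      rw [ContinuousLinearMap.comp_apply, i1, i2]
      exact DFunLike.congr_fun h2 (auxJ X₁ x)
  · intro z _ hu hu₁
    congr 1
    ext u
    simp only [ContinuousLinearMap.comp_apply]
    rw [sC]
    congr 1
    have e1 := DFunLike.congr_fun (Ring.mul_inverse_cancel _ hu₁) ((∑ k, z k • B₁ k) u)
    have e2 := congrArg (Subtype.val) e1
    rw [ContinuousLinearMap.mul_apply] at e2
    generalize Ring.inverse (1 - ∑ k, z k • A₁ k) ((∑ k, z k • B₁ k) u) = r at e2 ⊢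
    have e3 : (1 - ∑ k, z k • A k) (r : X) = (∑ k, z k • B k) u := by
      rw [← sB, ContinuousLinearMap.sub_apply, ← sA]
      exact e2
    rw [← e3]
    exact (DFunLike.congr_fun (Ring.inverse_mul_cancel _ hu) (r : X)).symm
end
end

section
/- Let α = (N; A, B, C, D; X, N⁻, N⁺) be a multiparametric conservative scattering LSDS. Then α is closely connected if and only if the linear pencil ζ ↦ ζA = ∑_{k=1}^N ζ_k A_k (ζ ∈ T^N) is completely non-unitary, i.e. there is no nonzero closed subspace X₀ ⊆ X that is invariant under every A_k and every A_k* and such that the restriction of ∑_{k=1}^N ζ_k A_k to X₀ is a unitary operator on X₀ for every ζ ∈ T^N. -/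
open ContinuousLinearMap

noncomputable section

/-- The linear pencil `ζ ↦ ∑ ζ_k A_k` (on the unit torus) is completely non-unitary: there is
no nonzero closed subspace, invariant under all `A_k` and `A_k*`, on which every `∑ ζ_k A_k`
(`ζ ∈ T^N`) restricts to a unitary operator. -/
def CompletelyNonUnitaryPencil {Nn : ℕ} {X : Type*}
    [NormedAddCommGroup X] [InnerProductSpace ℂ X] [CompleteSpace X]
    (A : Fin Nn → (X →L[ℂ] X)) : Prop :=
  ¬ ∃ X₀ : Submodule ℂ X, X₀ ≠ ⊥ ∧ IsClosed (X₀ : Set X) ∧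
      (∀ k, ∀ x ∈ X₀, A k x ∈ X₀) ∧ (∀ k, ∀ x ∈ X₀, adjoint (A k) x ∈ X₀) ∧
      (∀ ζ : Fin Nn → ℂ, (∀ k, ‖ζ k‖ = 1) →
        (∀ x ∈ X₀, ‖(∑ k, ζ k • A k) x‖ = ‖x‖) ∧
        X₀.map ((∑ k, ζ k • A k : X →L[ℂ] X) : X →ₗ[ℂ] X) = X₀)

theorem blockOp_apply_aux {X Nm Np : Type*}
    [NormedAddCommGroup X] [InnerProductSpace ℂ X]
    [NormedAddCommGroup Nm] [InnerProductSpace ℂ Nm]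
    [NormedAddCommGroup Np] [InnerProductSpace ℂ Np]
    (A : X →L[ℂ] X) (B : Nm →L[ℂ] X) (C : X →L[ℂ] Np) (D : Nm →L[ℂ] Np) (x : X) (u : Nm) :
    blockOp A B C D (WithLp.toLp 2 (x, u)) = WithLp.toLp 2 (A x + B u, C x + D u) := rfl

theorem blockOp_unitary_aux {X Nm Np : Type*}
    [NormedAddCommGroup X] [InnerProductSpace ℂ X] [CompleteSpace X]
    [NormedAddCommGroup Nm] [InnerProductSpace ℂ Nm] [CompleteSpace Nm]
    [NormedAddCommGroup Np] [InnerProductSpace ℂ Np] [CompleteSpace Np]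
    (A : X →L[ℂ] X) (B : Nm →L[ℂ] X) (C : X →L[ℂ] Np) (D : Nm →L[ℂ] Np)
    (h : IsUnitaryOp (blockOp A B C D)) :
    (∀ x, ‖A x‖ ^ 2 + ‖C x‖ ^ 2 = ‖x‖ ^ 2) ∧
    (∀ x u, inner ℂ (A x) (B u) + inner ℂ (C x) (D u) = 0) ∧
    (∀ x, (∀ u, inner ℂ (B u) x = 0) → A (adjoint A x) = x) := by
  obtain ⟨h1, h2⟩ := h
  have hin : ∀ p q, inner ℂ (blockOp A B C D p) (blockOp A B C D q) = inner ℂ p q := by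
    intro p q
    rw [← adjoint_inner_right]
    have := DFunLike.congr_fun h1 q
    simp only [ContinuousLinearMap.comp_apply, ContinuousLinearMap.id_apply] at this
    rw [this]
  refine ⟨fun x => ?_, fun x u => ?_, fun x hx => ?_⟩
  · have := hin (WithLp.toLp 2 (x, 0)) (WithLp.toLp 2 (x, 0))
    rw [blockOp_apply_aux] at this
    rw [WithLp.prod_inner_apply, WithLp.prod_inner_apply] at this
    simp only [map_zero, add_zero, inner_zero_right] at this
    simp only [inner_self_eq_norm_sq_to_K] at this
    exact_mod_cast this
  · have := hin (WithLp.toLp 2 (x, 0)) (WithLp.toLp 2 (0, u))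
    rw [blockOp_apply_aux, blockOp_apply_aux] at this
    simpa [WithLp.prod_inner_apply] using this
  · have hadj : adjoint (blockOp A B C D) (WithLp.toLp 2 (x, 0))
        = WithLp.toLp 2 (adjoint A x, 0) := by
      apply ext_inner_left ℂ
      intro p
      rw [adjoint_inner_right]
      have : p = WithLp.toLp 2 (p.fst, p.snd) := rfl
      rw [this, blockOp_apply_aux]
      simp [WithLp.prod_inner_apply, inner_add_left, adjoint_inner_right, hx]
    have := DFunLike.congr_fun h2 (WithLp.toLp 2 (x, 0))
    simp only [ContinuousLinearMap.comp_apply, ContinuousLinearMap.id_apply] at this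
    rw [hadj, blockOp_apply_aux] at this
    have h3 := congrArg (fun z => z.fst) this
    simpa using h3

theorem torus_sum_aux {n : ℕ} {E : Type*} [AddCommGroup E] [Module ℂ E] (v : Fin n → E)
    (h : ∀ ζ : Fin n → ℂ, (∀ k, ‖ζ k‖ = 1) → ∑ k, ζ k • v k = 0) (k : Fin n) : v k = 0 := by
  have h1 := h (fun _ => 1) (by simp)
  have h2 := h (fun j => if j = k then -1 else 1) (by intro j; split_ifs <;> simp)
  have h3 : ∑ j, ((1 : ℂ) • v j - (if j = k then (-1 : ℂ) else 1) • v j) = 0 := by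
    rw [Finset.sum_sub_distrib, h1, h2, sub_zero]
  rw [Finset.sum_eq_single k] at h3
  · have : (2 : ℂ) • v k = 0 := by
      rw [← h3]; simp [two_smul]
    simpa using this
  · intro j _ hj
    simp [hj]
  · simp

/-- a multiparametric conservative scattering LSDS is closely connected iff the
pencil `ζ ↦ ζA` is completely non-unitary. -/
theorem closely_connected_iff_completely_non_unitary {Nn : ℕ} {X Nm Np : Type*}
    [NormedAddCommGroup X] [InnerProductSpace ℂ X] [CompleteSpace X]
    [TopologicalSpace.SeparableSpace X]
    [NormedAddCommGroup Nm] [InnerProductSpace ℂ Nm] [CompleteSpace Nm]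
    [TopologicalSpace.SeparableSpace Nm]
    [NormedAddCommGroup Np] [InnerProductSpace ℂ Np] [CompleteSpace Np]
    [TopologicalSpace.SeparableSpace Np]
    (A : Fin Nn → (X →L[ℂ] X)) (B : Fin Nn → (Nm →L[ℂ] X))
    (C : Fin Nn → (X →L[ℂ] Np)) (D : Fin Nn → (Nm →L[ℂ] Np))
    (hcons : ∀ ζ : Fin Nn → ℂ, (∀ k, ‖ζ k‖ = 1) →
      IsUnitaryOp
        (blockOp (∑ k, ζ k • A k) (∑ k, ζ k • B k) (∑ k, ζ k • C k) (∑ k, ζ k • D k))) :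
    CloselyConnectedN A B C ↔ CompletelyNonUnitaryPencil A := by
  constructor
  · rintro hcc ⟨X₀, hne, -, hA, hA', hU⟩
    apply hne
    rw [Submodule.eq_bot_iff]
    have hC0 : ∀ x ∈ X₀, ∀ k, C k x = 0 := by
      intro x hx
      apply torus_sum_aux
      intro ζ hζ
      have h1 := (blockOp_unitary_aux _ _ _ _ (hcons ζ hζ)).1 x
      rw [(hU ζ hζ).1 x hx] at h1
      have h2 : ‖(∑ k, ζ k • C k) x‖ = 0 := by
        have : ‖(∑ k, ζ k • C k) x‖ ^ 2 = 0 := by linarith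
        simpa using this
      simpa [_root_.sum_apply] using h2
    have hB0 : ∀ x ∈ X₀, ∀ u k, inner ℂ x (B k u) = 0 := by
      intro x hx u
      apply torus_sum_aux
      intro ζ hζ
      have hmem := hx
      rw [← (hU ζ hζ).2] at hmem
      obtain ⟨y, hy, hyx⟩ := hmem
      have h1 := (blockOp_unitary_aux _ _ _ _ (hcons ζ hζ)).2.1 y u
      have h2 : (∑ k, ζ k • C k) y = 0 := by
        simp [_root_.sum_apply, hC0 y hy]
      have hyx' : (∑ k, ζ k • A k) y = x := hyx
      rw [h2, hyx', inner_zero_left, add_zero] at h1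
      simpa [_root_.sum_apply, inner_sum, inner_smul_right] using h1
    have hw : ∀ (w : List (Fin Nn × Bool)) (y : X), (∀ x ∈ X₀, inner ℂ x y = 0) →
        ∀ x ∈ X₀,
          inner ℂ x (((w.map fun p => cond p.2 (A p.1) (adjoint (A p.1))).prod) y) = 0 := by
      intro w y hy
      induction w with
      | nil => simpa using hy
      | cons p w ih =>
        intro x hx
        obtain ⟨k, b⟩ := p
        rw [List.map_cons, List.prod_cons, ContinuousLinearMap.mul_apply]
        cases b
        · simp only [cond_false]
          rw [adjoint_inner_right]
          exact ih _ (hA k x hx)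
        · simp only [cond_true]
          rw [← adjoint_inner_left]
          exact ih _ (hA' k x hx)
    intro x hx
    have hle : (Submodule.span ℂ {x : X | ∃ (w : List (Fin Nn × Bool)) (y : X),
      ((∃ k u, y = B k u) ∨ (∃ j v, y = adjoint (C j) v)) ∧
      x = ((w.map fun p => cond p.2 (A p.1) (adjoint (A p.1))).prod) y}).topologicalClosure
        ≤ (Submodule.span ℂ {x})ᗮ := by
      apply Submodule.topologicalClosure_minimal
      · rw [Submodule.span_le]
        rintro z ⟨w, y, hy, rfl⟩
        rw [SetLike.mem_coe, Submodule.mem_orthogonal_singleton_iff_inner_right]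
        apply hw _ _ _ x hx
        intro x' hx'
        rcases hy with ⟨k, u, rfl⟩ | ⟨j, v, rfl⟩
        · exact hB0 x' hx' u k
        · rw [adjoint_inner_right, hC0 x' hx', inner_zero_left]
      · exact Submodule.isClosed_orthogonal _
    have hcc' : _ = _ := hcc
    rw [hcc'] at hle
    have := hle (Submodule.mem_top (x := x))
    rw [Submodule.mem_orthogonal_singleton_iff_inner_right] at this
    exact inner_self_eq_zero.1 this
  · intro hcnu
    by_contra hcc
    apply hcnu
    set S : Set X := {x : X | ∃ (w : List (Fin Nn × Bool)) (y : X),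
      ((∃ k u, y = B k u) ∨ (∃ j v, y = adjoint (C j) v)) ∧
      x = ((w.map fun p => cond p.2 (A p.1) (adjoint (A p.1))).prod) y} with hS
    have hmem : ∀ x, x ∈ (Submodule.span ℂ S)ᗮ ↔ ∀ s ∈ S, inner ℂ s x = 0 := by
      intro x
      constructor
      · intro h s hs
        exact (Submodule.mem_orthogonal _ _).1 h s (Submodule.subset_span hs)
      · intro h
        have : Submodule.span ℂ S ≤ (Submodule.span ℂ {x})ᗮ := by
          rw [Submodule.span_le]
          intro s hs
          rw [SetLike.mem_coe, Submodule.mem_orthogonal_singleton_iff_inner_left]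
          exact h s hs
        rw [Submodule.mem_orthogonal]
        intro s hs
        exact Submodule.mem_orthogonal_singleton_iff_inner_left.1 (this hs)
    have hSA : ∀ k, ∀ s ∈ S, A k s ∈ S := by
      rintro k s ⟨w, y, hy, rfl⟩
      exact ⟨(k, true) :: w, y, hy, by simp⟩
    have hSA' : ∀ k, ∀ s ∈ S, adjoint (A k) s ∈ S := by
      rintro k s ⟨w, y, hy, rfl⟩
      exact ⟨(k, false) :: w, y, hy, by simp⟩
    have hiA : ∀ k, ∀ x ∈ (Submodule.span ℂ S)ᗮ, A k x ∈ (Submodule.span ℂ S)ᗮ := by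
      intro k x hx
      rw [hmem] at hx ⊢
      intro s hs
      rw [← adjoint_inner_left]
      exact hx _ (hSA' k s hs)
    have hiA' : ∀ k, ∀ x ∈ (Submodule.span ℂ S)ᗮ, adjoint (A k) x ∈ (Submodule.span ℂ S)ᗮ := by
      intro k x hx
      rw [hmem] at hx ⊢
      intro s hs
      rw [adjoint_inner_right]
      exact hx _ (hSA k s hs)
    have hB0 : ∀ x ∈ (Submodule.span ℂ S)ᗮ, ∀ k u, inner ℂ (B k u) x = 0 := by
      intro x hx k u
      exact (hmem x).1 hx _ ⟨[], _, Or.inl ⟨k, u, rfl⟩, by simp⟩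
    have hC0 : ∀ x ∈ (Submodule.span ℂ S)ᗮ, ∀ k, C k x = 0 := by
      intro x hx k
      apply ext_inner_left ℂ
      intro v
      rw [inner_zero_right, ← adjoint_inner_left]
      exact (hmem x).1 hx _ ⟨[], _, Or.inr ⟨k, v, rfl⟩, by simp⟩
    refine ⟨(Submodule.span ℂ S)ᗮ, ?_, Submodule.isClosed_orthogonal _, hiA, hiA', ?_⟩
    · intro h
      exact hcc ((Submodule.topologicalClosure_eq_top_iff).2 h)
    · intro ζ hζ
      obtain ⟨h1, -, h3⟩ := blockOp_unitary_aux _ _ _ _ (hcons ζ hζ)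
      refine ⟨fun x hx => ?_, le_antisymm ?_ ?_⟩
      · have h2 : (∑ k, ζ k • C k) x = 0 := by
          simp [_root_.sum_apply, hC0 x hx]
        have h4 := h1 x
        rw [h2] at h4
        simp only [norm_zero, ne_eq, OfNat.ofNat_ne_zero, not_false_eq_true, zero_pow,
          add_zero] at h4
        exact (sq_eq_sq₀ (norm_nonneg _) (norm_nonneg _)).1 h4
      · rintro _ ⟨x, hx, rfl⟩
        have : (∑ k, ζ k • A k) x ∈ (Submodule.span ℂ S)ᗮ := by
          rw [_root_.sum_apply]
          exact Submodule.sum_mem _ fun k _ => Submodule.smul_mem _ _ (hiA k x hx)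
        exact this
      · intro x hx
        refine ⟨adjoint (∑ k, ζ k • A k) x, ?_, h3 x ?_⟩
        · rw [map_sum, _root_.sum_apply]
          refine Submodule.sum_mem _ fun k _ => ?_
          rw [LinearIsometryEquiv.map_smulₛₗ]
          exact Submodule.smul_mem _ _ (hiA' k x hx)
        · intro u
          simp [_root_.sum_apply, sum_inner, inner_smul_left, hB0 x hx]
end
end
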